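/- arXiv:2001.08813 — 4 statements merged into one kernel-verified Lean document; each statement's English description precedes it below -/
import Mathlib

section
/- Assume additionally that each β_z is twice continuously differentiable on (0,∞) with β_z'' > 0 everywhere on (0,∞). Then Λ and Υ are differentiable on ℝ^d, the partial derivatives of Υ are ∂Υ/∂θ_i(θ) = Σ_{z∈Z} P_θ(z) f_i(z) = μ(P_θ)_i for all i and all θ ∈ ℝ^d, and Υ is a convex function on ℝ^d. -/
/-!
Write `T z θ` for `⟨θ, f z⟩`. The maximum of `t * x - β z x` over `x > 0` is attained at `e z t`, so
`e z t` is a subgradient at `t` of the conjugate of `β z`. Summing these subgradient inequalities at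
`t = T z θ - Λ θ`, the increments of `Λ` cancel because the weights `P_θ z = e z (T z θ - Λ θ)` add
up to `1`; hence `∑ z, P_θ z • T z` is a subgradient of `Υ` at `θ`. A function with a subgradient at
every point is convex, and it is differentiable wherever the subgradient depends continuously on the
point.

Since every `e z` is strictly increasing, `∑ z, e z (T z θ - Λ θ) = 1` forces `Λ` to be Lipschitz.
This gives the continuity of `θ ↦ P_θ`, and it makes the remainders in the first-order expansion of
that equation `o(η - θ)`, so that the expansion can be solved for `Λ η - Λ θ`.
-/

open Set Filter Topology Asymptotics

section Subgradient

variable {E : Type*} [NormedAddCommGroup E] [NormedSpace ℝ E]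

/-- `g` is a subgradient of `φ` at `x`, in the global sense of convex analysis: the affine function
with slope `g` through `(x, φ x)` lies below `φ` everywhere. -/
def HasSubgradientAt (φ : E → ℝ) (g : E →L[ℝ] ℝ) (x : E) : Prop :=
  ∀ y, φ x + g (y - x) ≤ φ y

namespace HasSubgradientAt

variable {φ : E → ℝ} {g : E → E →L[ℝ] ℝ}

theorem convexOn_univ (h : ∀ x, HasSubgradientAt φ (g x) x) : ConvexOn ℝ univ φ := by
  refine ⟨convex_univ, fun x _ y _ a b ha hb hab ↦ ?_⟩
  set w := a • x + b • y with hw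
  have barycenter : a * g w (x - w) + b * g w (y - w) = 0 := by
    simp only [map_sub, hw, map_add, map_smul, smul_eq_mul]
    linear_combination -(a * g w x + b * g w y) * hab
  calc φ w = a * (φ w + g w (x - w)) + b * (φ w + g w (y - w)) := by
        linear_combination -φ w * hab - barycenter
    _ ≤ a * φ x + b * φ y := by gcongr <;> exact h w _

theorem hasFDerivAt {x : E} (h : ∀ᶠ y in 𝓝 x, HasSubgradientAt φ (g y) y)
    (hg : ContinuousAt g x) : HasFDerivAt φ (g x) x := by
  rw [hasFDerivAt_iff_isLittleO, isLittleO_iff]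
  intro ε hε
  filter_upwards [h, Metric.continuousAt_iff'.mp hg ε hε] with y hsub hy
  have lower : 0 ≤ φ y - φ x - g x (y - x) := by linarith [h.self_of_nhds y]
  have upper : φ y - φ x - g x (y - x) ≤ (g y - g x) (y - x) := by
    have hyx := hsub x
    rw [← neg_sub y x, map_neg] at hyx
    rw [sub_apply]
    linarith
  calc ‖φ y - φ x - g x (y - x)‖ = φ y - φ x - g x (y - x) := Real.norm_of_nonneg lower
    _ ≤ ‖(g y - g x) (y - x)‖ := upper.trans (Real.le_norm_self _)
    _ ≤ ‖g y - g x‖ * ‖y - x‖ := (g y - g x).le_opNorm _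
    _ ≤ ε * ‖y - x‖ := by
        rw [dist_eq_norm] at hy
        gcongr

end HasSubgradientAt

end Subgradient

section Conjugate

variable {s : Set ℝ} {b : ℝ → ℝ}

/-- The convex conjugate of `b`, the supremum being taken over `s`. It is `0` at every slope `t` for
which `t * x - b x` is unbounded above on `s`. -/
noncomputable def conjugateOn (s : Set ℝ) (b : ℝ → ℝ) (t : ℝ) : ℝ :=
  sSup ((fun x ↦ t * x - b x) '' s)

theorem isGreatest_image_mul_sub_of_hasDerivAt {t x : ℝ} (hb : ConvexOn ℝ s b) (hx : x ∈ s)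
    (hd : HasDerivAt b t x) : IsGreatest ((fun y ↦ t * y - b y) '' s) (t * x - b x) := by
  refine ⟨mem_image_of_mem _ hx, ?_⟩
  rintro _ ⟨y, hy, rfl⟩
  change t * y - b y ≤ t * x - b x
  rcases lt_trichotomy y x with hyx | rfl | hxy
  · have hslope := hb.slope_le_of_hasDerivAt hy hx hyx hd
    rw [slope_def_field, div_le_iff₀ (sub_pos.mpr hyx)] at hslope
    linarith
  · exact le_rfl
  · have hslope := hb.le_slope_of_hasDerivAt hx hy hxy hd
    rw [slope_def_field, le_div_iff₀ (sub_pos.mpr hxy)] at hslope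
    linarith

theorem hasSubgradientAt_conjugateOn {e : ℝ → ℝ} (hb : ConvexOn ℝ s b) (hes : ∀ t, e t ∈ s)
    (hd : ∀ t, HasDerivAt b t (e t)) (t : ℝ) :
    HasSubgradientAt (conjugateOn s b) (.toSpanSingleton ℝ (e t)) t := by
  have greatest (u : ℝ) := isGreatest_image_mul_sub_of_hasDerivAt hb (hes u) (hd u)
  intro u
  calc conjugateOn s b t + ContinuousLinearMap.toSpanSingleton ℝ (e t) (u - t)
      = u * e t - b (e t) := by
        rw [conjugateOn, (greatest t).csSup_eq, ContinuousLinearMap.toSpanSingleton_apply,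
          smul_eq_mul]
        ring
    _ ≤ conjugateOn s b u := le_csSup (greatest u).bddAbove (mem_image_of_mem _ (hes t))

end Conjugate

section InverseFunction

variable {s : Set ℝ} {g e : ℝ → ℝ}

theorem strictMono_of_strictMonoOn_of_rightInverse (hg : StrictMonoOn g s) (hes : ∀ t, e t ∈ s)
    (hge : Function.RightInverse e g) : StrictMono e := fun t u htu ↦
  (hg.lt_iff_lt (hes t) (hes u)).mp (by rwa [hge t, hge u])

theorem continuous_of_strictMonoOn_of_rightInverse (hs : IsOpen s) (hg : StrictMonoOn g s)
    (hes : ∀ t, e t ∈ s) (hge : Function.RightInverse e g) : Continuous e := by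
  have hmono := strictMono_of_strictMonoOn_of_rightInverse hg hes hge
  refine continuous_iff_continuousAt.mpr fun t ↦
    (hmono.strictMonoOn univ).continuousAt_of_image_mem_nhds univ_mem ?_
  filter_upwards [hs.mem_nhds (hes t)] with x hx
  exact ⟨g x, mem_univ _, hg.injOn (hes _) hx (hge (g x))⟩

end InverseFunction

section Normalizer

variable {Z E : Type*} [Fintype Z] [NormedAddCommGroup E] [NormedSpace ℝ E]
  {e : Z → ℝ → ℝ} {T : Z → E →L[ℝ] ℝ} {Λ : E → ℝ}

/-- `Λ` makes the weights `P_θ z = e z (T z θ - Λ θ)` of the Bregman family sum to `1`. The linear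
functional `T z` plays the part of `θ ↦ ⟨θ, f z⟩`. -/
def IsNormalizer (e : Z → ℝ → ℝ) (T : Z → E →L[ℝ] ℝ) (Λ : E → ℝ) : Prop :=
  ∀ θ, ∑ z, e z (T z θ - Λ θ) = 1

namespace IsNormalizer

theorem nonempty (hΛ : IsNormalizer e T Λ) : Nonempty Z := by
  have hsum : ∑ z, e z (T z 0 - Λ 0) ≠ 0 := (hΛ 0).trans_ne one_ne_zero
  exact Finset.univ_nonempty_iff.mp (Finset.nonempty_of_sum_ne_zero hsum)

theorem lipschitzWith (hΛ : IsNormalizer e T Λ) (he : ∀ z, StrictMono (e z)) :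
    LipschitzWith (∑ z, ‖T z‖₊) Λ := by
  have := hΛ.nonempty
  refine LipschitzWith.of_le_add_mul _ fun θ η ↦ ?_
  obtain ⟨z, -, hz⟩ := Finset.exists_le_of_sum_le Finset.univ_nonempty
    ((hΛ η).trans (hΛ θ).symm).le
  have hTz : ‖T z‖ ≤ ∑ z, ‖T z‖ :=
    Finset.single_le_sum (f := fun z ↦ ‖T z‖) (fun _ _ ↦ norm_nonneg _) (Finset.mem_univ z)
  calc Λ θ ≤ Λ η + T z (θ - η) := by
        rw [map_sub]
        linarith [(he z).le_iff_le.mp hz]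
    _ ≤ Λ η + ‖T z‖ * ‖θ - η‖ := by
        gcongr
        exact (Real.le_norm_self _).trans ((T z).le_opNorm _)
    _ ≤ Λ η + ↑(∑ z, ‖T z‖₊) * dist θ η := by
        rw [NNReal.coe_sum, dist_eq_norm]
        gcongr
        exact hTz

theorem hasFDerivAt (hΛ : IsNormalizer e T Λ) (he : ∀ z, StrictMono (e z))
    {c : Z → ℝ} {θ : E} (hc : ∑ z, c z ≠ 0) (hd : ∀ z, HasDerivAt (e z) (c z) (T z θ - Λ θ)) :
    HasFDerivAt Λ ((∑ z, c z)⁻¹ • ∑ z, c z • T z) θ := by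
  have hLip := hΛ.lipschitzWith he
  have hΛO : (fun η ↦ Λ η - Λ θ) =O[𝓝 θ] fun η ↦ η - θ :=
    .of_bound _ (.of_forall fun η ↦ hLip.norm_sub_le η θ)
  have remainder (z : Z) : (fun η ↦ e z (T z η - Λ η) - e z (T z θ - Λ θ) -
      (T z η - Λ η - (T z θ - Λ θ)) • c z) =o[𝓝 θ] fun η ↦ η - θ := by
    have hargO : (fun η ↦ T z η - Λ η - (T z θ - Λ θ)) =O[𝓝 θ] fun η ↦ η - θ :=
      (((T z).isBigO_sub (𝓝 θ) θ).sub hΛO).congr_left fun η ↦ by rw [map_sub]; ring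
    have hargcont : ContinuousAt (fun η ↦ T z η - Λ η) θ :=
      ((T z).continuous.sub hLip.continuous).continuousAt
    exact ((hasDerivAt_iff_isLittleO.mp (hd z)).comp_tendsto hargcont).trans_isBigO hargO
  have linearized : (fun η ↦ (∑ z, c z) * (Λ η - Λ θ) - ∑ z, c z * T z (η - θ)) =o[𝓝 θ]
      fun η ↦ η - θ := by
    refine (IsLittleO.fun_sum fun z (_ : z ∈ Finset.univ) ↦ remainder z).congr_left fun η ↦ ?_
    rw [Finset.sum_sub_distrib, Finset.sum_sub_distrib, hΛ η, hΛ θ, sub_self, zero_sub,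
      Finset.sum_mul, ← Finset.sum_sub_distrib, ← Finset.sum_neg_distrib]
    refine Finset.sum_congr rfl fun z _ ↦ ?_
    rw [map_sub, smul_eq_mul]
    ring
  rw [hasFDerivAt_iff_isLittleO]
  refine (linearized.const_mul_left (∑ z, c z)⁻¹).congr_left fun η ↦ ?_
  simp only [smul_apply, sum_apply, smul_eq_mul]
  rw [mul_sub, inv_mul_cancel_left₀ hc]

theorem hasSubgradientAt (hΛ : IsNormalizer e T Λ) {ψ : Z → ℝ → ℝ}
    (hψ : ∀ z t, HasSubgradientAt (ψ z) (.toSpanSingleton ℝ (e z t)) t) (θ : E) :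
    HasSubgradientAt (fun η ↦ Λ η + ∑ z, ψ z (T z η - Λ η))
      (∑ z, e z (T z θ - Λ θ) • T z) θ := by
  intro η
  have hterm (z : Z) : ψ z (T z θ - Λ θ) + e z (T z θ - Λ θ) * (T z (η - θ) - (Λ η - Λ θ)) ≤
      ψ z (T z η - Λ η) := by
    have h := hψ z (T z θ - Λ θ) (T z η - Λ η)
    rw [ContinuousLinearMap.toSpanSingleton_apply, smul_eq_mul] at h
    rw [map_sub]
    linarith
  have cancel (δ : ℝ) : ∑ z, e z (T z θ - Λ θ) * (T z (η - θ) - δ) =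
      ∑ z, e z (T z θ - Λ θ) * T z (η - θ) - δ := by
    simp only [mul_sub, Finset.sum_sub_distrib]
    rw [← Finset.sum_mul, hΛ θ, one_mul]
  have hsum := Finset.sum_le_sum fun z (_ : z ∈ Finset.univ) ↦ hterm z
  rw [Finset.sum_add_distrib, cancel] at hsum
  simp only [sum_apply, smul_apply, smul_eq_mul]
  linarith

end IsNormalizer

end Normalizer

theorem stmt_3_general {Z E : Type*} [Fintype Z] [NormedAddCommGroup E] [NormedSpace ℝ E]
    {β β' β'' e : Z → ℝ → ℝ}
    (hβ : ∀ z x, 0 < x → HasDerivAt (β z) (β' z x) x)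
    (hβ' : ∀ z x, 0 < x → HasDerivAt (β' z) (β'' z x) x)
    (hβ'' : ∀ z x, 0 < x → 0 < β'' z x)
    (he_pos : ∀ z t, 0 < e z t) (he : ∀ z, Function.RightInverse (e z) (β' z))
    {T : Z → E →L[ℝ] ℝ} {Λ : E → ℝ} (hΛ : IsNormalizer e T Λ) {Υ : E → ℝ}
    (hΥ : ∀ θ, Υ θ = Λ θ + ∑ z, conjugateOn (Ioi 0) (β z) (T z θ - Λ θ)) :
    Differentiable ℝ Λ ∧ (∀ θ, HasFDerivAt Υ (∑ z, e z (T z θ - Λ θ) • T z) θ) ∧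
      ConvexOn ℝ univ Υ := by
  have hβ'_mono (z : Z) : StrictMonoOn (β' z) (Ioi 0) :=
    strictMonoOn_of_hasDerivWithinAt_pos (convex_Ioi 0)
      (fun x hx ↦ (hβ' z x hx).continuousAt.continuousWithinAt)
      (fun x hx ↦ (hβ' z x (interior_subset hx)).hasDerivWithinAt)
      (fun x hx ↦ hβ'' z x (interior_subset hx))
  have hβ_convex (z : Z) : ConvexOn ℝ (Ioi 0) (β z) :=
    convexOn_of_hasDerivWithinAt2_nonneg (convex_Ioi 0)
      (fun x hx ↦ (hβ z x hx).continuousAt.continuousWithinAt)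
      (fun x hx ↦ (hβ z x (interior_subset hx)).hasDerivWithinAt)
      (fun x hx ↦ (hβ' z x (interior_subset hx)).hasDerivWithinAt)
      (fun x hx ↦ (hβ'' z x (interior_subset hx)).le)
  have he_mono (z : Z) : StrictMono (e z) :=
    strictMono_of_strictMonoOn_of_rightInverse (hβ'_mono z) (he_pos z) (he z)
  have he_cont (z : Z) : Continuous (e z) :=
    continuous_of_strictMonoOn_of_rightInverse isOpen_Ioi (hβ'_mono z) (he_pos z) (he z)
  have he_deriv (z : Z) (t : ℝ) : HasDerivAt (e z) (β'' z (e z t))⁻¹ t :=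
    .of_local_left_inverse (he_cont z).continuousAt (hβ' z _ (he_pos z t))
      (hβ'' z _ (he_pos z t)).ne' (.of_forall (he z))
  have hΛ_cont : Continuous Λ := (hΛ.lipschitzWith he_mono).continuous
  have hΥ_subgradient (θ : E) : HasSubgradientAt Υ (∑ z, e z (T z θ - Λ θ) • T z) θ := by
    rw [funext hΥ]
    refine hΛ.hasSubgradientAt (fun z ↦ hasSubgradientAt_conjugateOn (hβ_convex z) (he_pos z)
      fun t ↦ ?_) θ
    simpa only [he z t] using hβ z (e z t) (he_pos z t)
  refine ⟨fun θ ↦ ?_, fun θ ↦ ?_, HasSubgradientAt.convexOn_univ hΥ_subgradient⟩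
  · have := hΛ.nonempty
    have hsum : 0 < ∑ z, (β'' z (e z (T z θ - Λ θ)))⁻¹ :=
      Finset.sum_pos (fun z _ ↦ inv_pos.mpr (hβ'' z _ (he_pos z _))) Finset.univ_nonempty
    exact (hΛ.hasFDerivAt he_mono hsum.ne' fun z ↦ he_deriv z _).differentiableAt
  · exact HasSubgradientAt.hasFDerivAt (.of_forall hΥ_subgradient)
      (by fun_prop : Continuous fun θ ↦ ∑ z, e z (T z θ - Λ θ) • T z).continuousAt

theorem stmt_3 {Z : Type} [Fintype Z] [Nonempty Z] {d : ℕ}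
    (β β' : Z → ℝ → ℝ)
    (hβc : ∀ z, ContinuousOn (β z) (Set.Ici 0))
    (hβsc : ∀ z, StrictConvexOn ℝ (Set.Ioi 0) (β z))
    (hβd : ∀ z x, 0 < x → HasDerivAt (β z) (β' z x) x)
    (hβ'bot : ∀ z, Filter.Tendsto (β' z) (nhdsWithin 0 (Set.Ioi 0)) Filter.atBot)
    (hβ'top : ∀ z, Filter.Tendsto (β' z) Filter.atTop Filter.atTop)
    (e : Z → ℝ → ℝ)
    (he_pos : ∀ z r, 0 < e z r)
    (he_left : ∀ z r, β' z (e z r) = r)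
    (he_right : ∀ z x, 0 < x → e z (β' z x) = x)
    (β'' : Z → ℝ → ℝ)
    (hβd2 : ∀ z x, 0 < x → HasDerivAt (β' z) (β'' z x) x)
    (hβ''c : ∀ z, ContinuousOn (β'' z) (Set.Ioi 0))
    (hβ''pos : ∀ z x, 0 < x → 0 < β'' z x)
    (f : Z → Fin d → ℝ)
    (prob : Set (Z → ℝ))
    (hprob : prob = {P : Z → ℝ | (∀ z, 0 ≤ P z) ∧ (∑ z, P z) = 1})
    (μ : (Z → ℝ) → Fin d → ℝ)
    (hμ : ∀ P i, μ P i = ∑ z, P z * f z i)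
    (H : (Z → ℝ) → ℝ)
    (hH : ∀ Q, H Q = ∑ z, β z (Q z))
    (Λ : (Fin d → ℝ) → ℝ)
    (hΛ : ∀ θ, (∑ z, e z ((∑ i, θ i * f z i) - Λ θ)) = 1)
    (Pθ : (Fin d → ℝ) → Z → ℝ)
    (hPθ : ∀ θ z, Pθ θ z = e z ((∑ i, θ i * f z i) - Λ θ))
    (βstar : Z → ℝ → ℝ)
    (hβstar : ∀ z t, βstar z t = sSup ((fun x => t * x - β z x) '' Set.Ioi 0))
    (Υ : (Fin d → ℝ) → ℝ)
    (hΥ : ∀ θ, Υ θ = Λ θ + ∑ z, βstar z ((∑ i, θ i * f z i) - Λ θ)) :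
    Differentiable ℝ Λ ∧ Differentiable ℝ Υ ∧
    (∀ θ : Fin d → ℝ, ∀ i : Fin d, fderiv ℝ Υ θ (Pi.single i 1) = ∑ z, Pθ θ z * f z i) ∧
    ConvexOn ℝ Set.univ Υ := by
  obtain ⟨hΛ_diff, hΥ_deriv, hΥ_convex⟩ := stmt_3_general hβd hβd2 hβ''pos he_pos he_left
    (T := fun z ↦ (Fintype.linearCombination ℝ (f z)).toContinuousLinearMap) (Υ := Υ) hΛ
    fun θ ↦ by simp only [hΥ, hβstar]; rfl
  refine ⟨hΛ_diff, fun θ ↦ (hΥ_deriv θ).differentiableAt, fun θ i ↦ ?_, hΥ_convex⟩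
  simp [(hΥ_deriv θ).fderiv, hPθ, Fintype.linearCombination_apply, Pi.single_apply]
end

section
/- Let Q ∈ cl(ℰ) (the closure of ℰ in 𝒫(Z)) and let P ∈ 𝒫(Z) satisfy μ(P) = μ(Q). Then Q = Π_P; that is, Q is the unique minimizer of H over {R ∈ 𝒫(Z) : μ(R) = μ(P)}. -/
/-!
The Bregman divergence `D (R, q) = H R - H q - ∑ z, β' z (q z) * (R z - q z)` is nonnegative, and
for `q` in the family `β'(q)` is an affine function of the statistic `f`, so that
`H R - H Q = D (R, q) - D (Q, q)` whenever `R` and `Q` have the same mean. Let `q → Q`: it remains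
to see that `D (Q, q) → 0`, even at coordinates where `Q` vanishes and `β'` blows up. Reflecting
`Q` through `q` eliminates the slope: convexity bounds each coordinate of `D (Q, q)` by the second
difference `β Q - 2 * β q + β (2 * q - Q)`, which tends to `0` by continuity of `β` alone.
-/

open Set Filter Topology

section Scalar

variable {b b' : ℝ → ℝ} {s : Set ℝ} {x y : ℝ}

theorem convexOn_Ici_of_convexOn_Ioi {a : ℝ} (hcont : ContinuousOn b (Ici a))
    (hconv : ConvexOn ℝ (Ioi a) b) (hdiff : ∀ x, a < x → DifferentiableAt ℝ b x) :
    ConvexOn ℝ (Ici a) b := by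
  refine MonotoneOn.convexOn_of_deriv (convex_Ici a) hcont ?_ ?_ <;> rw [interior_Ici]
  · exact fun x hx ↦ (hdiff x hx).differentiableWithinAt
  · exact hconv.monotoneOn_deriv hdiff

/-- The Bregman divergence of `y` from `x`: the error at `y` of the tangent to `b` at `x`. The
slope is passed as a separate function `b'`, to be taken as the derivative of `b`. -/
def bregmanDiv (b b' : ℝ → ℝ) (y x : ℝ) : ℝ :=
  b y - b x - b' x * (y - x)

theorem bregmanDiv_nonneg (hconv : ConvexOn ℝ s b) (hx : x ∈ s) (hy : y ∈ s)
    (hderiv : HasDerivAt b (b' x) x) : 0 ≤ bregmanDiv b b' y x := by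
  unfold bregmanDiv
  rcases lt_trichotomy x y with hxy | rfl | hyx
  · have hslope := hconv.le_slope_of_hasDerivAt hx hy hxy hderiv
    rw [slope_def_field, le_div_iff₀ (sub_pos.2 hxy)] at hslope
    linarith
  · simp
  · have hslope := hconv.slope_le_of_hasDerivAt hy hx hyx hderiv
    rw [slope_def_field, div_le_iff₀ (sub_pos.2 hyx)] at hslope
    linarith

theorem bregmanDiv_le_second_difference (hconv : ConvexOn ℝ s b) (hx : x ∈ s)
    (hxy : 2 * x - y ∈ s) (hderiv : HasDerivAt b (b' x) x) :
    bregmanDiv b b' y x ≤ b y - 2 * b x + b (2 * x - y) := by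
  have hreflect := bregmanDiv_nonneg hconv hx hxy hderiv
  unfold bregmanDiv at hreflect ⊢
  linarith

theorem eventually_le_two_mul_sub {a : ℝ} (hy : a ≤ y) : ∀ᶠ x in 𝓝[Ioi a] y, a ≤ 2 * x - y := by
  rcases hy.eq_or_lt with rfl | hy
  · filter_upwards [self_mem_nhdsWithin] with x hx
    linarith [mem_Ioi.1 hx]
  · filter_upwards [mem_nhdsWithin_of_mem_nhds (Ioi_mem_nhds (add_div_two_lt_right.2 hy))] with x hx
    linarith [mem_Ioi.1 hx]

theorem tendsto_bregmanDiv_nhds_zero {a : ℝ} (hcont : ContinuousOn b (Ici a))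
    (hconv : ConvexOn ℝ (Ici a) b) (hderiv : ∀ x, a < x → HasDerivAt b (b' x) x) (hy : a ≤ y) :
    Tendsto (bregmanDiv b b' y) (𝓝[Ioi a] y) (𝓝 0) := by
  have hreflect_mem := eventually_le_two_mul_sub hy
  have hpoint : Tendsto b (𝓝[Ioi a] y) (𝓝 (b y)) :=
    (hcont y hy).mono_left (nhdsWithin_mono y Ioi_subset_Ici_self)
  have hreflect : Tendsto (fun x ↦ b (2 * x - y)) (𝓝[Ioi a] y) (𝓝 (b y)) := by
    refine (hcont y hy).tendsto.comp (tendsto_nhdsWithin_iff.2 ⟨?_, hreflect_mem⟩)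
    have hlim : Tendsto (fun x ↦ 2 * x - y) (𝓝 y) (𝓝 (2 * y - y)) :=
      Continuous.tendsto (by fun_prop) y
    rw [two_mul, add_sub_cancel_right] at hlim
    exact hlim.mono_left nhdsWithin_le_nhds
  have hsecond : Tendsto (fun x ↦ b y - 2 * b x + b (2 * x - y)) (𝓝[Ioi a] y) (𝓝 0) := by
    convert (hpoint.const_mul 2).const_sub (b y) |>.add hreflect using 2
    ring
  refine tendsto_of_tendsto_of_tendsto_of_le_of_le' tendsto_const_nhds hsecond ?_ ?_
  · filter_upwards [self_mem_nhdsWithin] with x hx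
    exact bregmanDiv_nonneg hconv (mem_Ici_of_Ioi hx) hy (hderiv x hx)
  · filter_upwards [self_mem_nhdsWithin, hreflect_mem] with x hx hxy
    exact bregmanDiv_le_second_difference hconv (mem_Ici_of_Ioi hx) hxy (hderiv x hx)

end Scalar

section Family

variable {Z E : Type*} [Fintype Z] [AddCommGroup E] [Module ℝ E]
  {β β' : Z → ℝ → ℝ} {f : Z → E} {q Q R : Z → ℝ}

theorem sum_sub_sum_eq_sum_bregmanDiv (β β' : Z → ℝ → ℝ) (q Q R : Z → ℝ) :
    ∑ z, β z (R z) - ∑ z, β z (Q z) =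
      ∑ z, bregmanDiv (β z) (β' z) (R z) (q z) - ∑ z, bregmanDiv (β z) (β' z) (Q z) (q z) +
        ∑ z, β' z (q z) * (R z - Q z) := by
  simp only [← Finset.sum_sub_distrib, ← Finset.sum_add_distrib]
  exact Finset.sum_congr rfl fun z _ ↦ by unfold bregmanDiv; ring

theorem sum_le_sum_of_mem_closure {a : ℝ} (hcont : ∀ z, ContinuousOn (β z) (Ici a))
    (hconv : ∀ z, ConvexOn ℝ (Ici a) (β z)) (hderiv : ∀ z x, a < x → HasDerivAt (β z) (β' z x) x)
    {S : Set (Z → ℝ)} (hlt : ∀ q ∈ S, ∀ z, a < q z) (hQ : Q ∈ closure S) (hR : ∀ z, a ≤ R z)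
    (hvar : ∀ q ∈ S, 0 ≤ ∑ z, β' z (q z) * (R z - Q z)) :
    ∑ z, β z (Q z) ≤ ∑ z, β z (R z) := by
  have := mem_closure_iff_nhdsWithin_neBot.1 hQ
  have hmem : ∀ᶠ q in 𝓝[S] Q, q ∈ S := self_mem_nhdsWithin
  have hcoord (z : Z) : Tendsto (fun q ↦ q z) (𝓝[S] Q) (𝓝 (Q z)) :=
    ((continuous_apply z).tendsto Q).mono_left nhdsWithin_le_nhds
  have hQ_ge (z : Z) : a ≤ Q z :=
    ge_of_tendsto (hcoord z) (hmem.mono fun q hq ↦ (hlt q hq z).le)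
  have hdiv : Tendsto (fun q ↦ ∑ z, bregmanDiv (β z) (β' z) (Q z) (q z)) (𝓝[S] Q) (𝓝 0) := by
    rw [← Finset.sum_const_zero (s := Finset.univ (α := Z))]
    exact tendsto_finsetSum _ fun z _ ↦
      (tendsto_bregmanDiv_nhds_zero (hcont z) (hconv z) (hderiv z) (hQ_ge z)).comp
        (tendsto_nhdsWithin_iff.2 ⟨hcoord z, hmem.mono fun q hq ↦ hlt q hq z⟩)
  refine sub_nonneg.1 (le_of_tendsto (neg_zero (G := ℝ) ▸ hdiv.neg) (hmem.mono fun q hq ↦ ?_))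
  have hR_div : 0 ≤ ∑ z, bregmanDiv (β z) (β' z) (R z) (q z) := Finset.sum_nonneg fun z _ ↦
    bregmanDiv_nonneg (hconv z) (hlt q hq z).le (hR z) (hderiv z _ (hlt q hq z))
  linarith [sum_sub_sum_eq_sum_bregmanDiv β β' q Q R, hvar q hq]

/-- The Bregman family with statistic `f`, given by its first-order condition: `β'(P)` is an affine
function of `f`. Characterizing the members this way, rather than through the inverse of `β'`,
makes sense without surjectivity of `β'`; the constant `r` is the paper's `Λ θ`. -/
def bregmanFamily (β' : Z → ℝ → ℝ) (f : Z → E) : Set (Z → ℝ) :=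
  {P ∈ stdSimplex ℝ Z |
    (∀ z, 0 < P z) ∧ ∃ (θ : Module.Dual ℝ E) (r : ℝ), ∀ z, β' z (P z) = θ (f z) - r}

theorem mem_bregmanFamily_of_rightInverse {ι : Type*} [Fintype ι] {f : Z → ι → ℝ}
    {e : Z → ℝ → ℝ} (he_pos : ∀ z r, 0 < e z r) (he : ∀ z, Function.RightInverse (e z) (β' z))
    {θ : ι → ℝ} {r : ℝ} (hsum : ∑ z, e z (∑ i, θ i * f z i - r) = 1) :
    (fun z ↦ e z (∑ i, θ i * f z i - r)) ∈ bregmanFamily β' f := by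
  refine ⟨⟨fun z ↦ (he_pos z _).le, hsum⟩, fun z ↦ he_pos z _, Fintype.linearCombination ℝ θ, r,
    fun z ↦ ?_⟩
  simp [he z _, Fintype.linearCombination_apply, mul_comm]

theorem closure_bregmanFamily_subset_stdSimplex :
    closure (bregmanFamily β' f) ⊆ stdSimplex ℝ Z :=
  closure_minimal (sep_subset _ _) (isCompact_stdSimplex ℝ Z).isClosed

theorem sum_mul_sub_eq_zero_of_mem_bregmanFamily (hq : q ∈ bregmanFamily β' f)
    (hsum : ∑ z, R z = ∑ z, Q z)
    (hmean : Fintype.linearCombination ℝ f R = Fintype.linearCombination ℝ f Q) :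
    ∑ z, β' z (q z) * (R z - Q z) = 0 := by
  obtain ⟨-, -, θ, r, hβ'⟩ := hq
  have hpair (P : Z → ℝ) :
      ∑ z, β' z (q z) * P z = θ (Fintype.linearCombination ℝ f P) - r * ∑ z, P z := by
    simp [Fintype.linearCombination_apply, hβ', sub_mul, Finset.mul_sum, mul_comm (P _)]
  simp only [mul_sub, Finset.sum_sub_distrib, hpair, hsum, hmean, sub_self]

theorem stmt_6_general (hcont : ∀ z, ContinuousOn (β z) (Ici 0))
    (hconv : ∀ z, ConvexOn ℝ (Ioi 0) (β z)) (hderiv : ∀ z x, 0 < x → HasDerivAt (β z) (β' z x) x)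
    (hQ : Q ∈ closure (bregmanFamily β' f)) :
    Q ∈ stdSimplex ℝ Z ∧ IsMinOn (fun R ↦ ∑ z, β z (R z))
      {R ∈ stdSimplex ℝ Z |
        Fintype.linearCombination ℝ f R = Fintype.linearCombination ℝ f Q} Q := by
  have hQ_mem := closure_bregmanFamily_subset_stdSimplex hQ
  refine ⟨hQ_mem, fun R ⟨hR, hmean⟩ ↦ ?_⟩
  have hconv_Ici (z : Z) := convexOn_Ici_of_convexOn_Ioi (hcont z) (hconv z)
    fun x hx ↦ (hderiv z x hx).differentiableAt
  have hsum : ∑ z, R z = ∑ z, Q z := hR.2.trans hQ_mem.2.symm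
  exact sum_le_sum_of_mem_closure hcont hconv_Ici hderiv (fun q hq ↦ hq.2.1) hQ hR.1
    fun q hq ↦ (sum_mul_sub_eq_zero_of_mem_bregmanFamily hq hsum hmean).ge

end Family

theorem stmt_6 {Z : Type} [Fintype Z] [Nonempty Z] {d : ℕ}
    (β β' : Z → ℝ → ℝ)
    (hβc : ∀ z, ContinuousOn (β z) (Set.Ici 0))
    (hβsc : ∀ z, StrictConvexOn ℝ (Set.Ioi 0) (β z))
    (hβd : ∀ z x, 0 < x → HasDerivAt (β z) (β' z x) x)
    (hβ'bot : ∀ z, Filter.Tendsto (β' z) (nhdsWithin 0 (Set.Ioi 0)) Filter.atBot)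
    (hβ'top : ∀ z, Filter.Tendsto (β' z) Filter.atTop Filter.atTop)
    (e : Z → ℝ → ℝ)
    (he_pos : ∀ z r, 0 < e z r)
    (he_left : ∀ z r, β' z (e z r) = r)
    (he_right : ∀ z x, 0 < x → e z (β' z x) = x)
    (f : Z → Fin d → ℝ)
    (prob : Set (Z → ℝ))
    (hprob : prob = {P : Z → ℝ | (∀ z, 0 ≤ P z) ∧ (∑ z, P z) = 1})
    (μ : (Z → ℝ) → Fin d → ℝ)
    (hμ : ∀ P i, μ P i = ∑ z, P z * f z i)
    (H : (Z → ℝ) → ℝ)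
    (hH : ∀ Q, H Q = ∑ z, β z (Q z))
    (Λ : (Fin d → ℝ) → ℝ)
    (hΛ : ∀ θ, (∑ z, e z ((∑ i, θ i * f z i) - Λ θ)) = 1)
    (Pθ : (Fin d → ℝ) → Z → ℝ)
    (hPθ : ∀ θ z, Pθ θ z = e z ((∑ i, θ i * f z i) - Λ θ))
    (Pr : (Z → ℝ) → Z → ℝ)
    (hPr : ∀ P ∈ prob, Pr P ∈ prob ∧ μ (Pr P) = μ P ∧
      (∀ Q ∈ prob, μ Q = μ P → H (Pr P) ≤ H Q) ∧
      (∀ Q ∈ prob, μ Q = μ P → H Q = H (Pr P) → Q = Pr P)) :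
    ∀ Q ∈ closure {R : Z → ℝ | ∃ θ : Fin d → ℝ, R = Pθ θ},
      ∀ P ∈ prob, μ P = μ Q → Q = Pr P := by
  intro Q hQ P hP hPQ
  have hfamily : {R | ∃ θ, R = Pθ θ} ⊆ bregmanFamily β' f := by
    rintro _ ⟨θ, rfl⟩
    exact funext (hPθ θ) ▸ mem_bregmanFamily_of_rightInverse he_pos he_left (hΛ θ)
  have hmean : μ = Fintype.linearCombination ℝ f := by
    ext R i
    simp [hμ, Fintype.linearCombination_apply]
  obtain rfl : prob = stdSimplex ℝ Z := hprob
  obtain ⟨hPr_mem, hPr_mean, hPr_min, hPr_unique⟩ := hPr P hP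
  obtain ⟨hQ_mem, hQ_min⟩ :=
    stmt_6_general hβc (fun z ↦ (hβsc z).convexOn) hβd (closure_mono hfamily hQ)
  refine hPr_unique Q hQ_mem hPQ.symm (le_antisymm ?_ (hPr_min Q hQ_mem hPQ.symm))
  simp only [hH]
  exact hQ_min ⟨hPr_mem, hmean ▸ hPr_mean.trans hPQ⟩
end

section
/- Call a subset S ⊆ Z facial if there exists a face F of the polytope conv{f(z) : z ∈ Z} (that is, a convex subset F that is extreme in conv{f(z) : z ∈ Z}) such that S = {z ∈ Z : f(z) ∈ F}. For every P ∈ 𝒫(Z), supp(Π_P) is the smallest facial set containing supp(P): supp(Π_P) is facial, supp(P) ⊆ supp(Π_P), and supp(Π_P) ⊆ S for every facial set S with supp(P) ⊆ S. -/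
/-!
Along a segment issuing from a minimizer `p` of `H`, every coordinate that becomes positive
contributes a slope `-∞` to `H`, while the slopes of the other coordinates stay bounded above. Hence
`p` has the largest support among all measures with the same mean `x`.

The smallest face of the polytope containing `x` consists of the points `y` such that the segment
from `y` to `x` can be prolonged beyond `x` inside the polytope. If `p z > 0`, then
`p + p z • (p - δ_z)` is a probability measure, which prolongs the segment from `f z` to `x`.
Conversely, a prolongation of this segment yields a measure with mean `x` that charges `z`, so that
`p z > 0` by maximality of the support. Thus `supp p` is the set of all `z` with `f z` in the
smallest face containing `x`.
-/

open AffineMap Filter Function Set Topology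

section Slope

variable {b b' : ℝ → ℝ}

theorem tendsto_slope_atBot_of_tendsto_deriv_atBot {a : ℝ} (hcont : ContinuousOn b (Ici a))
    (hderiv : ∀ x, a < x → HasDerivAt b (b' x) x) (hbot : Tendsto b' (𝓝[>] a) atBot) :
    Tendsto (slope b a) (𝓝[>] a) atBot := by
  refine tendsto_atBot.2 fun M ↦ ?_
  obtain ⟨u, hau, hu⟩ := mem_nhdsGT_iff_exists_Ioo_subset.1 (tendsto_atBot.1 hbot M)
  filter_upwards [Ioo_mem_nhdsGT hau] with x hx
  obtain ⟨c, hc, hslope⟩ := exists_hasDerivAt_eq_slope b b' hx.1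
    (hcont.mono Icc_subset_Ici_self) fun y hy ↦ hderiv y hy.1
  rw [slope_def_field, ← hslope]
  exact hu ⟨hc.1, hc.2.trans hx.2⟩

variable {x y : ℝ}

theorem isBoundedUnder_slope_comp_lineMap_of_hasDerivAt {b₀ : ℝ} (hderiv : HasDerivAt b b₀ x) :
    (𝓝[>] (0 : ℝ)).IsBoundedUnder (· ≤ ·) (slope (b ∘ lineMap x y) 0) := by
  have hcomp : HasDerivAt (b ∘ lineMap x y) (b₀ * (y - x)) (0 : ℝ) :=
    HasDerivAt.comp 0 (by simpa using hderiv) hasDerivAt_lineMap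
  exact ((hasDerivAt_iff_tendsto_slope.1 hcomp).mono_left (nhdsGT_le_nhdsNE 0)).isBoundedUnder_le

theorem tendsto_slope_comp_lineMap_zero_atBot (hcont : ContinuousOn b (Ici 0))
    (hderiv : ∀ x, 0 < x → HasDerivAt b (b' x) x) (hbot : Tendsto b' (𝓝[>] 0) atBot)
    (hy : 0 < y) :
    Tendsto (slope (b ∘ lineMap 0 y) 0) (𝓝[>] (0 : ℝ)) atBot := by
  have hline (t : ℝ) : lineMap 0 y t = t * y := by simp [lineMap_apply]
  have hpos : MapsTo (lineMap 0 y) (Ioi (0 : ℝ)) (Ioi 0) := fun t ht ↦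
    (hline t).symm ▸ mul_pos ht hy
  have hnonneg : MapsTo (lineMap 0 y) (Ici (0 : ℝ)) (Ici 0) := fun t ht ↦
    (hline t).symm ▸ mul_nonneg ht hy.le
  have hscale : Tendsto (lineMap 0 y) (𝓝[>] (0 : ℝ)) (𝓝[>] 0) := by
    simpa using lineMap_continuous.continuousWithinAt.tendsto_nhdsWithin (x := 0) hpos
  exact tendsto_slope_atBot_of_tendsto_deriv_atBot
    (hcont.comp lineMap_continuous.continuousOn hnonneg)
    (fun t ht ↦ (hderiv _ (hpos ht)).comp t hasDerivAt_lineMap)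
    ((hbot.comp hscale).atBot_mul_const (by simpa using hy))

theorem isBoundedUnder_slope_comp_lineMap (hcont : ContinuousOn b (Ici 0))
    (hderiv : ∀ x, 0 < x → HasDerivAt b (b' x) x) (hbot : Tendsto b' (𝓝[>] 0) atBot)
    (hx : 0 ≤ x) (hy : 0 ≤ y) :
    (𝓝[>] (0 : ℝ)).IsBoundedUnder (· ≤ ·) (slope (b ∘ lineMap x y) 0) := by
  rcases hx.eq_or_lt with rfl | hx
  · rcases hy.eq_or_lt with rfl | hy
    · exact isBoundedUnder_of ⟨0, fun t ↦ by simp [slope]⟩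
    · exact (tendsto_slope_comp_lineMap_zero_atBot hcont hderiv hbot hy).isBoundedUnder_le_atBot
  · exact isBoundedUnder_slope_comp_lineMap_of_hasDerivAt (hderiv x hx)

end Slope

section Minimizer

variable {Z : Type*} [Fintype Z]

theorem tendsto_sum_atBot_of_isBoundedUnder {α : Type*} {l : Filter α} {g : Z → α → ℝ} {z : Z}
    (hz : Tendsto (g z) l atBot) (hbdd : ∀ w, l.IsBoundedUnder (· ≤ ·) (g w)) :
    Tendsto (∑ w, g w) l atBot := by
  classical
  rw [← Finset.add_sum_erase _ _ (Finset.mem_univ z)]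
  obtain ⟨C, hC⟩ := isBoundedUnder_le_sum (Finset.univ.erase z) fun w _ ↦ hbdd w
  exact tendsto_atBot_add_right_of_ge' l C hz (eventually_map.1 hC)

theorem support_subset_support_of_isMinOn_sum {β β' : Z → ℝ → ℝ}
    (hcont : ∀ z, ContinuousOn (β z) (Ici 0))
    (hderiv : ∀ z x, 0 < x → HasDerivAt (β z) (β' z x) x)
    (hbot : ∀ z, Tendsto (β' z) (𝓝[>] 0) atBot)
    {K : Set (Z → ℝ)} (hK : Convex ℝ K) (hK_nonneg : K ⊆ Ici 0) {p q : Z → ℝ}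
    (hp : p ∈ K) (hq : q ∈ K) (hmin : IsMinOn (fun Q ↦ ∑ z, β z (Q z)) K p) :
    support q ⊆ support p := by
  intro z hqz hpz
  have hslope_z : Tendsto (slope (β z ∘ lineMap (p z) (q z)) 0) (𝓝[>] (0 : ℝ)) atBot := by
    rw [hpz]
    exact tendsto_slope_comp_lineMap_zero_atBot (hcont z) (hderiv z) (hbot z)
      ((hK_nonneg hq z).lt_of_ne' hqz)
  have hslope_sum : Tendsto (∑ w, slope (β w ∘ lineMap (p w) (q w)) 0) (𝓝[>] (0 : ℝ)) atBot :=
    tendsto_sum_atBot_of_isBoundedUnder hslope_z fun w ↦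
      isBoundedUnder_slope_comp_lineMap (hcont w) (hderiv w) (hbot w)
        (hK_nonneg hp w) (hK_nonneg hq w)
  obtain ⟨t, hneg, ht⟩ := ((hslope_sum.eventually_lt_atBot 0).and
    (Ioo_mem_nhdsGT (zero_lt_one' ℝ))).exists
  have hmin_t : ∑ w, β w (p w) ≤ ∑ w, β w (lineMap (p w) (q w) t) := by
    simpa only [mem_ofPred_eq, pi_lineMap_apply] using
      hmin (hK.lineMap_mem hp hq ⟨ht.1.le, ht.2.le⟩)
  refine hneg.not_ge ?_
  have hsum : (∑ w, slope (β w ∘ lineMap (p w) (q w)) 0) t =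
      t⁻¹ * (∑ w, β w (lineMap (p w) (q w) t) - ∑ w, β w (p w)) := by
    simp [slope, Finset.mul_sum, mul_sub]
  rw [hsum]
  exact mul_nonneg (inv_nonneg.2 ht.1.le) (sub_nonneg.2 hmin_t)

end Minimizer

section MinimalFace

variable {𝕜 E : Type*} [Field 𝕜] [LinearOrder 𝕜] [IsStrictOrderedRing 𝕜]
  [AddCommGroup E] [Module 𝕜 E] {C F : Set E} {x : E}

variable (𝕜) in
/-- The smallest face of the convex set `C` containing the point `x ∈ C`, encoded as the set of
points `y ∈ C` such that the segment from `y` to `x` can be prolonged beyond `x` inside `C`. -/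
def minimalFace (C : Set E) (x : E) : Set E :=
  {y ∈ C | ∃ ε : 𝕜, 0 < ε ∧ x + ε • (x - y) ∈ C}

theorem convex_minimalFace (hC : Convex 𝕜 C) (hx : x ∈ C) : Convex 𝕜 (minimalFace 𝕜 C x) := by
  have shorten {v : E} {ε δ : 𝕜} (hδ : 0 < δ) (hδε : δ ≤ ε) (hε : x + ε • v ∈ C) :
      x + δ • v ∈ C := by
    have hε0 : 0 < ε := hδ.trans_le hδε
    have := hC.add_smul_mem hx hε ⟨div_nonneg hδ.le hε0.le, (div_le_one hε0).2 hδε⟩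
    rwa [smul_smul, div_mul_cancel₀ _ hε0.ne'] at this
  rintro y₁ ⟨hy₁, ε₁, hε₁, h₁⟩ y₂ ⟨hy₂, ε₂, hε₂, h₂⟩ a b ha hb hab
  have hmin : 0 < min ε₁ ε₂ := lt_min hε₁ hε₂
  refine ⟨hC hy₁ hy₂ ha hb hab, min ε₁ ε₂, hmin, ?_⟩
  convert hC (shorten hmin (min_le_left _ _) h₁) (shorten hmin (min_le_right _ _) h₂) ha hb hab
    using 1
  obtain rfl : b = 1 - a := eq_sub_of_add_eq' hab
  module

theorem isExtreme_minimalFace (hC : Convex 𝕜 C) : IsExtreme 𝕜 C (minimalFace 𝕜 C x) := by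
  refine ⟨fun y hy ↦ hy.1, ?_⟩
  rintro y₁ hy₁ y₂ hy₂ _ ⟨-, ε, hε, hw⟩ ⟨a, b, ha, hb, hab, rfl⟩
  -- The segment from `y₁` to `x` is prolonged up to the barycenter of the endpoint of the given
  -- prolongation and of `y₂`, with weights `1 : ε * b`.
  have hden : 0 < 1 + ε * b := by positivity
  refine ⟨hy₁, ε * a / (1 + ε * b), by positivity, ?_⟩
  convert hC hw hy₂ (inv_nonneg.2 hden.le) (b := ε * b / (1 + ε * b)) (by positivity)
    (by field_simp) using 1
  obtain rfl : a = 1 - b := eq_sub_of_add_eq hab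
  match_scalars <;> field_simp <;> ring

theorem minimalFace_subset_of_isExtreme (hF : IsExtreme 𝕜 C F) (hx : x ∈ F) :
    minimalFace 𝕜 C x ⊆ F := by
  rintro y ⟨hy, ε, hε, hw⟩
  refine hF.left_mem_of_mem_openSegment hy hw hx
    ⟨ε / (1 + ε), 1 / (1 + ε), by positivity, by positivity, by field_simp; ring, ?_⟩
  match_scalars <;> field_simp
  ring

end MinimalFace

section Facial

variable {𝕜 E Z : Type*} [Field 𝕜] [LinearOrder 𝕜] [IsStrictOrderedRing 𝕜]
  [AddCommGroup E] [Module 𝕜 E] {f : Z → E}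

variable (𝕜) in
/-- A set of indices is facial for `f` if it is the preimage of a face of the polytope spanned by
the points `f z`. A face is a convex extreme subset; the empty face is allowed. -/
def IsFacial (f : Z → E) (S : Set Z) : Prop :=
  ∃ F : Set E, Convex 𝕜 F ∧ IsExtreme 𝕜 (convexHull 𝕜 (range f)) F ∧ S = {z | f z ∈ F}

variable [Fintype Z] {p : Z → 𝕜}

local notation "mean" => Fintype.linearCombination 𝕜 f

theorem convexHull_range_eq_image_stdSimplex :
    convexHull 𝕜 (range f) = mean '' stdSimplex 𝕜 Z := by
  classical
  rw [← convexHull_rangle_single_eq_stdSimplex, LinearMap.image_convexHull, ← range_comp]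
  congr! 2
  ext z
  simp

theorem linearCombination_mem_of_support_subset {F : Set E} (hF : Convex 𝕜 F)
    (hp : p ∈ stdSimplex 𝕜 Z) (hsupp : support p ⊆ {z | f z ∈ F}) : mean p ∈ F := by
  rw [Fintype.linearCombination_apply, ← finsum_eq_sum_of_fintype]
  exact hF.finsum_mem hp.1 ((finsum_eq_sum_of_fintype p).trans hp.2) fun z hz ↦ hsupp hz

theorem add_smul_sub_single_mem_stdSimplex [DecidableEq Z] (hp : p ∈ stdSimplex 𝕜 Z) (z : Z) :
    p + p z • (p - Pi.single z 1) ∈ stdSimplex 𝕜 Z := by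
  refine ⟨fun w ↦ ?_, by simp [Finset.sum_add_distrib, ← Finset.mul_sum, hp.2]⟩
  rcases eq_or_ne w z with rfl | hwz
  · calc 0 ≤ p w * p w := mul_self_nonneg _
      _ = (p + p w • (p - Pi.single w 1) : Z → 𝕜) w := by simp; ring
  · calc 0 ≤ p w + p z * p w := add_nonneg (hp.1 w) (mul_nonneg (hp.1 z) (hp.1 w))
      _ = (p + p z • (p - Pi.single z 1) : Z → 𝕜) w := by simp [hwz]

theorem mem_minimalFace_of_mem_support (hp : p ∈ stdSimplex 𝕜 Z) {z : Z} (hz : z ∈ support p) :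
    f z ∈ minimalFace 𝕜 (convexHull 𝕜 (range f)) (mean p) := by
  classical
  refine ⟨subset_convexHull 𝕜 _ (mem_range_self z), p z, (hp.1 z).lt_of_ne' hz, ?_⟩
  rw [convexHull_range_eq_image_stdSimplex]
  exact ⟨_, add_smul_sub_single_mem_stdSimplex hp z, by simp⟩

theorem exists_mem_support_of_mem_minimalFace {z : Z}
    (hz : f z ∈ minimalFace 𝕜 (convexHull 𝕜 (range f)) (mean p)) :
    ∃ q ∈ stdSimplex 𝕜 Z, mean q = mean p ∧ z ∈ support q := by
  classical
  obtain ⟨-, ε, hε, hw⟩ := hz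
  rw [convexHull_range_eq_image_stdSimplex] at hw
  obtain ⟨r, hr, hrw⟩ := hw
  refine ⟨(1 / (1 + ε)) • r + (ε / (1 + ε)) • Pi.single z 1,
    convex_stdSimplex 𝕜 Z hr (single_mem_stdSimplex 𝕜 z) (by positivity) (by positivity)
      (by field_simp), ?_, ?_⟩
  · rw [map_add, map_smul, map_smul, hrw, Fintype.linearCombination_apply_single]
    match_scalars <;> field_simp
    ring
  · have hrz := hr.1 z
    simp only [mem_support, Pi.add_apply, Pi.smul_apply, Pi.single_eq_same, smul_eq_mul]
    positivity

theorem support_eq_setOf_mem_minimalFace (hp : p ∈ stdSimplex 𝕜 Z)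
    (hmax : ∀ q ∈ stdSimplex 𝕜 Z, mean q = mean p → support q ⊆ support p) :
    support p = {z | f z ∈ minimalFace 𝕜 (convexHull 𝕜 (range f)) (mean p)} := by
  refine Subset.antisymm (fun z hz ↦ mem_minimalFace_of_mem_support hp hz) fun z hz ↦ ?_
  obtain ⟨q, hq, hqp, hzq⟩ := exists_mem_support_of_mem_minimalFace hz
  exact hmax q hq hqp hzq

theorem isLeast_support_of_maximal_support {P : Z → 𝕜} (hP : P ∈ stdSimplex 𝕜 Z)
    (hp : p ∈ stdSimplex 𝕜 Z) (hpP : mean p = mean P)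
    (hmax : ∀ q ∈ stdSimplex 𝕜 Z, mean q = mean p → support q ⊆ support p) :
    IsLeast {S | IsFacial 𝕜 f S ∧ support P ⊆ S} (support p) := by
  have hsupp := support_eq_setOf_mem_minimalFace hp hmax
  have hhull : Convex 𝕜 (convexHull 𝕜 (range f)) := convex_convexHull 𝕜 _
  have hmean : mean p ∈ convexHull 𝕜 (range f) :=
    convexHull_range_eq_image_stdSimplex (𝕜 := 𝕜) (f := f) ▸ mem_image_of_mem _ hp
  refine ⟨⟨⟨_, convex_minimalFace hhull hmean, isExtreme_minimalFace hhull, hsupp⟩,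
    hmax P hP hpP.symm⟩, ?_⟩
  rintro _ ⟨⟨F, hF, hFext, rfl⟩, hPF⟩
  have hmeanF : mean p ∈ F := hpP ▸ linearCombination_mem_of_support_subset hF hP hPF
  rw [hsupp]
  exact fun z hz ↦ minimalFace_subset_of_isExtreme hFext hmeanF hz

end Facial

theorem support_eq_setOf_pos_of_mem_stdSimplex {𝕜 Z : Type*} [Semiring 𝕜] [PartialOrder 𝕜]
    [Fintype Z] {p : Z → 𝕜} (hp : p ∈ stdSimplex 𝕜 Z) : support p = {z | 0 < p z} :=
  ext fun z ↦ (hp.1 z).lt_iff_ne'.symm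

theorem stmt_9_general {Z E : Type*} [Fintype Z] [AddCommGroup E] [Module ℝ E]
    {β β' : Z → ℝ → ℝ}
    (hcont : ∀ z, ContinuousOn (β z) (Ici 0))
    (hderiv : ∀ z x, 0 < x → HasDerivAt (β z) (β' z x) x)
    (hbot : ∀ z, Tendsto (β' z) (𝓝[>] 0) atBot)
    {f : Z → E} {P p : Z → ℝ} (hP : P ∈ stdSimplex ℝ Z) (hp : p ∈ stdSimplex ℝ Z)
    (hpP : Fintype.linearCombination ℝ f p = Fintype.linearCombination ℝ f P)
    (hmin : IsMinOn (fun Q ↦ ∑ z, β z (Q z)) {Q ∈ stdSimplex ℝ Z |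
      Fintype.linearCombination ℝ f Q = Fintype.linearCombination ℝ f P} p) :
    IsLeast {S | IsFacial ℝ f S ∧ support P ⊆ S} (support p) := by
  refine isLeast_support_of_maximal_support hP hp hpP fun q hq hqp ↦ ?_
  have hfiber : Convex ℝ {Q ∈ stdSimplex ℝ Z |
      Fintype.linearCombination ℝ f Q = Fintype.linearCombination ℝ f P} :=
    (convex_stdSimplex ℝ Z).inter ((convex_singleton _).linear_preimage _)
  exact support_subset_support_of_isMinOn_sum hcont hderiv hbot hfiber (fun Q hQ ↦ hQ.1.1)
    ⟨hp, hpP⟩ ⟨hq, hqp.trans hpP⟩ hmin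

theorem stmt_9 {Z : Type} [Fintype Z] [Nonempty Z] {d : ℕ}
    (β β' : Z → ℝ → ℝ)
    (hβc : ∀ z, ContinuousOn (β z) (Set.Ici 0))
    (hβsc : ∀ z, StrictConvexOn ℝ (Set.Ioi 0) (β z))
    (hβd : ∀ z x, 0 < x → HasDerivAt (β z) (β' z x) x)
    (hβ'bot : ∀ z, Filter.Tendsto (β' z) (nhdsWithin 0 (Set.Ioi 0)) Filter.atBot)
    (hβ'top : ∀ z, Filter.Tendsto (β' z) Filter.atTop Filter.atTop)
    (f : Z → Fin d → ℝ)
    (prob : Set (Z → ℝ))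
    (hprob : prob = {P : Z → ℝ | (∀ z, 0 ≤ P z) ∧ (∑ z, P z) = 1})
    (μ : (Z → ℝ) → Fin d → ℝ)
    (hμ : ∀ P i, μ P i = ∑ z, P z * f z i)
    (H : (Z → ℝ) → ℝ)
    (hH : ∀ Q, H Q = ∑ z, β z (Q z))
    (Pr : (Z → ℝ) → Z → ℝ)
    (hPr : ∀ P ∈ prob, Pr P ∈ prob ∧ μ (Pr P) = μ P ∧
      (∀ Q ∈ prob, μ Q = μ P → H (Pr P) ≤ H Q) ∧
      (∀ Q ∈ prob, μ Q = μ P → H Q = H (Pr P) → Q = Pr P))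
    (Facial : Set Z → Prop)
    (hFacial : ∀ S : Set Z, Facial S ↔ ∃ F : Set (Fin d → ℝ),
      Convex ℝ F ∧ IsExtreme ℝ (convexHull ℝ (Set.range f)) F ∧ S = {z | f z ∈ F}) :
    ∀ P ∈ prob,
      Facial {z | 0 < Pr P z} ∧
      {z | 0 < P z} ⊆ {z | 0 < Pr P z} ∧
      (∀ S : Set Z, Facial S → {z | 0 < P z} ⊆ S → {z | 0 < Pr P z} ⊆ S) := by
  intro P hP
  obtain ⟨hp, hpP, hmin, -⟩ := hPr P hP
  have hmean : μ = Fintype.linearCombination ℝ f := by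
    ext Q i
    simp [hμ, Fintype.linearCombination_apply]
  obtain rfl : prob = stdSimplex ℝ Z := hprob
  obtain rfl : H = fun Q ↦ ∑ z, β z (Q z) := funext hH
  obtain rfl : Facial = IsFacial ℝ f := funext fun S ↦ propext (hFacial S)
  subst hmean
  obtain ⟨⟨hfacial, hsub⟩, hleast⟩ := stmt_9_general hβc hβd hβ'bot hP hp hpP
    fun Q hQ ↦ hmin Q hQ.1 hQ.2
  rw [← support_eq_setOf_pos_of_mem_stdSimplex hP, ← support_eq_setOf_pos_of_mem_stdSimplex hp]
  exact ⟨hfacial, hsub, fun S hS hPS ↦ hleast ⟨hS, hPS⟩⟩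
end

section
/- Let P ∈ 𝒫(Z) and set u := P − Π_P, and assume u ≠ 0. Then Π_P is also the unique minimizer of H over the set {R ∈ 𝒫(Z) : R − P ∈ ℝ·u}; that is, Π_u(P) = Π_P. Consequently Σ_z (P(z) − Π_u(P)(z))·u(z) > 0, i.e. P ∈ 𝒫_u^+. -/
/-!
Moving `P` along `u = P - Π_P` leaves every moment unchanged, so the line through `P` in direction
`u` is contained in the moment fibre of `P`. It also contains `Π_P`, and the unique minimizer over
a set is the unique minimizer over every subset to which it belongs.
-/

/-- `a` is the unique minimizer of `H` over `S`. Uniqueness is expressed by the values of `H`: no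
other point of `S` attains the value `H a`. -/
structure IsUniqueMinOn {α γ : Type*} [Preorder γ] (H : α → γ) (S : Set α) (a : α) : Prop where
  mem : a ∈ S
  isMinOn : IsMinOn H S a
  eq_of_apply_eq : ∀ b ∈ S, H b = H a → b = a

section UniqueMinimizer

variable {α γ : Type*} {H : α → γ} {S T : Set α} {a b : α}

theorem isUniqueMinOn_sep_iff [Preorder γ] {p : α → Prop} :
    IsUniqueMinOn H {x ∈ S | p x} a ↔
      a ∈ S ∧ p a ∧ (∀ x ∈ S, p x → H a ≤ H x) ∧ ∀ x ∈ S, p x → H x = H a → x = a where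
  mp h := ⟨h.mem.1, h.mem.2, fun _ hx hpx ↦ h.isMinOn ⟨hx, hpx⟩,
    fun x hx hpx ↦ h.eq_of_apply_eq x ⟨hx, hpx⟩⟩
  mpr := fun ⟨haS, hpa, hmin, huniq⟩ ↦
    ⟨⟨haS, hpa⟩, fun x hx ↦ hmin x hx.1 hx.2, fun x hx ↦ huniq x hx.1 hx.2⟩

theorem IsUniqueMinOn.mono [Preorder γ] (h : IsUniqueMinOn H S a) (hTS : T ⊆ S) (ha : a ∈ T) :
    IsUniqueMinOn H T a :=
  ⟨ha, h.isMinOn.on_subset hTS, fun b hb ↦ h.eq_of_apply_eq b (hTS hb)⟩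

theorem IsUniqueMinOn.unique [PartialOrder γ] (ha : IsUniqueMinOn H S a)
    (hb : IsUniqueMinOn H S b) : a = b :=
  hb.eq_of_apply_eq a ha.mem (le_antisymm (ha.isMinOn hb.mem) (hb.isMinOn ha.mem))

end UniqueMinimizer

section Line

variable {𝕜 E F γ : Type*} [Ring 𝕜] [AddCommGroup E] [Module 𝕜 E] [AddCommGroup F] [Module 𝕜 F]

open Submodule

theorem map_eq_of_sub_mem_span_singleton {μ : E →ₗ[𝕜] F} {u x y : E} (hu : μ u = 0)
    (hxy : x - y ∈ span 𝕜 {u}) : μ x = μ y :=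
  LinearMap.sub_mem_ker_iff.1 ((span_singleton_le_iff_mem u _).2 hu hxy)

theorem IsUniqueMinOn.line_of_fiber [Preorder γ] {H : E → γ} {C : Set E} {μ : E →ₗ[𝕜] F} {x y : E}
    (h : IsUniqueMinOn H {z ∈ C | μ z = μ x} y) :
    IsUniqueMinOn H {z ∈ C | z - x ∈ span 𝕜 {x - y}} y := by
  have hdir : μ (x - y) = 0 := by rw [map_sub, h.mem.2, sub_self]
  have hy : y - x ∈ span 𝕜 {x - y} := by
    simpa only [neg_sub] using neg_mem (mem_span_singleton_self (R := 𝕜) (x - y))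
  exact h.mono (fun z hz ↦ ⟨hz.1, map_eq_of_sub_mem_span_singleton hdir hz.2⟩) ⟨h.mem.1, hy⟩

theorem sub_mem_span_singleton_iff_forall_eq_mul {ι : Type*} {u x y : ι → 𝕜} :
    x - y ∈ span 𝕜 {u} ↔ ∃ t : 𝕜, ∀ i, x i - y i = t * u i := by
  simp only [mem_span_singleton, funext_iff, Pi.smul_apply, Pi.sub_apply, smul_eq_mul, eq_comm]

end Line

theorem dotProduct_self_pos {ι 𝕜 : Type*} [Fintype ι] [Ring 𝕜] [LinearOrder 𝕜]
    [IsStrictOrderedRing 𝕜] {u : ι → 𝕜} (hu : u ≠ 0) : 0 < u ⬝ᵥ u :=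
  (Finset.sum_nonneg fun i _ ↦ mul_self_nonneg (u i)).lt_of_ne' (mt dotProduct_self_eq_zero.1 hu)

theorem stmt_13_general {Z 𝕜 F γ : Type*} [Fintype Z] [Ring 𝕜] [LinearOrder 𝕜]
    [IsStrictOrderedRing 𝕜] [AddCommGroup F] [Module 𝕜 F] [PartialOrder γ]
    {C : Set (Z → 𝕜)} {μ : (Z → 𝕜) →ₗ[𝕜] F} {H : (Z → 𝕜) → γ} {P Q R : Z → 𝕜}
    (hQ : IsUniqueMinOn H {x ∈ C | μ x = μ P} Q)
    (hR : IsUniqueMinOn H {x ∈ C | x - P ∈ Submodule.span 𝕜 {P - Q}} R)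
    (hne : P - Q ≠ 0) :
    R = Q ∧ 0 < (P - R) ⬝ᵥ (P - Q) := by
  obtain rfl : R = Q := hR.unique hQ.line_of_fiber
  exact ⟨rfl, dotProduct_self_pos hne⟩

theorem stmt_13 {Z : Type} [Fintype Z] [Nonempty Z] {d : ℕ}
    (β β' : Z → ℝ → ℝ)
    (hβc : ∀ z, ContinuousOn (β z) (Set.Ici 0))
    (hβsc : ∀ z, StrictConvexOn ℝ (Set.Ioi 0) (β z))
    (hβd : ∀ z x, 0 < x → HasDerivAt (β z) (β' z x) x)
    (hβ'bot : ∀ z, Filter.Tendsto (β' z) (nhdsWithin 0 (Set.Ioi 0)) Filter.atBot)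
    (hβ'top : ∀ z, Filter.Tendsto (β' z) Filter.atTop Filter.atTop)
    (f : Z → Fin d → ℝ)
    (prob : Set (Z → ℝ))
    (hprob : prob = {P : Z → ℝ | (∀ z, 0 ≤ P z) ∧ (∑ z, P z) = 1})
    (μ : (Z → ℝ) → Fin d → ℝ)
    (hμ : ∀ P i, μ P i = ∑ z, P z * f z i)
    (H : (Z → ℝ) → ℝ)
    (hH : ∀ Q, H Q = ∑ z, β z (Q z))
    (Pr : (Z → ℝ) → Z → ℝ)
    (hPr : ∀ P ∈ prob, Pr P ∈ prob ∧ μ (Pr P) = μ P ∧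
      (∀ Q ∈ prob, μ Q = μ P → H (Pr P) ≤ H Q) ∧
      (∀ Q ∈ prob, μ Q = μ P → H Q = H (Pr P) → Q = Pr P))
    (Pru : (Z → ℝ) → (Z → ℝ) → Z → ℝ)
    (hPru : ∀ u : Z → ℝ, (∑ z, u z) = 0 → u ≠ 0 → ∀ Q ∈ prob,
      Pru u Q ∈ prob ∧ (∃ t : ℝ, ∀ z, Pru u Q z - Q z = t * u z) ∧
      (∀ R ∈ prob, (∃ t : ℝ, ∀ z, R z - Q z = t * u z) → H (Pru u Q) ≤ H R) ∧
      (∀ R ∈ prob, (∃ t : ℝ, ∀ z, R z - Q z = t * u z) → H R = H (Pru u Q) → R = Pru u Q))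
    (Pplus : (Z → ℝ) → Set (Z → ℝ))
    (hPplus : ∀ u, Pplus u = {Q | Q ∈ prob ∧ 0 < ∑ z, (Q z - Pru u Q z) * u z})
    (P : Z → ℝ) (hP : P ∈ prob)
    (hne : P - Pr P ≠ 0) :
    Pru (P - Pr P) P = Pr P ∧ P ∈ Pplus (P - Pr P) := by
  obtain rfl : μ = Fintype.linearCombination ℝ f := by
    ext Q i
    simp [hμ, Fintype.linearCombination_apply]
  have hfiber : IsUniqueMinOn H
      {Q ∈ prob | Fintype.linearCombination ℝ f Q = Fintype.linearCombination ℝ f P} (Pr P) :=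
    isUniqueMinOn_sep_iff.2 (hPr P hP)
  have hsum : ∑ z, (P - Pr P) z = 0 := by
    subst hprob
    simp [Finset.sum_sub_distrib, hP.2, hfiber.mem.1.2]
  have hline : IsUniqueMinOn H
      {R ∈ prob | R - P ∈ Submodule.span ℝ {P - Pr P}} (Pru (P - Pr P) P) := by
    simp only [isUniqueMinOn_sep_iff, sub_mem_span_singleton_iff_forall_eq_mul]
    exact hPru (P - Pr P) hsum hne P hP
  obtain ⟨heq, hpos⟩ := stmt_13_general hfiber hline hne
  rw [hPplus]
  exact ⟨heq, hP, hpos⟩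
end
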